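/- arXiv:1707.01867 — 2 statements merged into one kernel-verified Lean document; each statement's English description precedes it below -/
import Mathlib

section
/- Let a, b, c be complex numbers such that c is not a nonpositive integer. Define c_{2j+1} = −(a+j)(c−b+j)/((c+2j)(c+2j+1)) for j ≥ 0, c_{2j} = −(b+j)(c−a+j)/((c+2j−1)(c+2j)) for j ≥ 1, d_j = −c_j, a_0 = 2 − 4d_1, a_n = 2 − 4d_{2n+1} − 4d_{2n+2} for n ≥ 1, b_k² = 16 d_{2k+3} d_{2k+4} for k ≥ 0, and let b_k = (b_k²)^{1/2} be the principal complex square root of b_k². Then ∑_{k=0}^∞ |a_k| < ∞ and ∑_{k=0}^∞ |b_k − 1| < ∞; in particular lim_{k→∞} b_k = 1. -/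
open Filter Topology

open Asymptotics

/-!
Each subsequence `4 d_{2n+1}`, `4 d_{2n+2}` is a quotient of monic quadratics in `n`, so it equals
`1 + α / n + O(n⁻²)`. The two values of `α` are `a - b - 1/2` and its negative, so the `1 / n` terms
cancel both in the sum `4 d_{2n+1} + 4 d_{2n+2}` and in the product `16 d_{2n+1} d_{2n+2}`. This
gives the summability of `a_n` and of `b_k² - 1`, and the principal square root does not increase
the distance to `1`.
-/

section InvNatExpansion

variable {𝕜 : Type*} [RCLike 𝕜]

/-- `HasInvNatExpansion f α` is the first-order asymptotic expansion `f n = 1 + α / n + O(n⁻²)`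
as `n → ∞`, which makes the `1 / n` terms of sums and products visible; the junk value of `α / n` at
`n = 0` does not affect it. -/
def HasInvNatExpansion (f : ℕ → 𝕜) (α : 𝕜) : Prop :=
  (fun n : ℕ => f n - (1 + α / n)) =O[atTop] fun n : ℕ => (n : 𝕜)⁻¹ ^ 2

lemma isBigO_inv_add_natCast (p : 𝕜) :
    (fun n : ℕ => (p + n)⁻¹) =O[atTop] fun n : ℕ => (n : 𝕜)⁻¹ := by
  refine (isEquivalent_of_tendsto_one ?_).isBigO
  refine (tendsto_natCast_div_add_atTop p).congr fun n => ?_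
  rw [Pi.div_apply, inv_div_inv, add_comm]

lemma isBigO_inv_natCast_sq :
    (fun n : ℕ => (n : 𝕜)⁻¹ ^ 2) =O[atTop] fun n : ℕ => (n : 𝕜)⁻¹ := by
  have bounded : (fun n : ℕ => (n : 𝕜)⁻¹) =O[atTop] fun _ : ℕ => (1 : 𝕜) :=
    tendsto_inv_atTop_nhds_zero_nat.isBigO_one 𝕜
  simpa only [sq, one_mul] using bounded.mul (isBigO_refl (fun n : ℕ => (n : 𝕜)⁻¹) atTop)

lemma eventually_add_natCast_ne_zero (p : 𝕜) : ∀ᶠ n : ℕ in atTop, p + n ≠ 0 := by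
  filter_upwards [(tendsto_natCast_div_add_atTop p).eventually_ne one_ne_zero] with n hn
  exact add_comm (n : 𝕜) p ▸ (div_ne_zero_iff.mp hn).2

lemma hasInvNatExpansion_add_div_add (u p : 𝕜) :
    HasInvNatExpansion (fun n => (u + n) / (p + n)) (u - p) := by
  have remainder : (fun n : ℕ => (u - p) * -p * ((p + n)⁻¹ * (n : 𝕜)⁻¹)) =O[atTop]
      fun n : ℕ => (n : 𝕜)⁻¹ ^ 2 := by
    simp only [sq]
    exact ((isBigO_inv_add_natCast p).mul (isBigO_refl _ _)).const_mul_left _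
  refine remainder.congr' ?_ .rfl
  filter_upwards [eventually_add_natCast_ne_zero p, eventually_ne_atTop 0] with n hpn hn
  have hn' : (n : 𝕜) ≠ 0 := Nat.cast_ne_zero.mpr hn
  field_simp
  ring

namespace HasInvNatExpansion

variable {f g : ℕ → 𝕜} {α β : 𝕜}

lemma isBigO_sub_one (hf : HasInvNatExpansion f α) :
    (fun n => f n - 1) =O[atTop] fun n : ℕ => (n : 𝕜)⁻¹ := by
  have leading : (fun n : ℕ => α / n) =O[atTop] fun n : ℕ => (n : 𝕜)⁻¹ := by
    simpa only [div_eq_mul_inv] using (isBigO_refl (fun n : ℕ => (n : 𝕜)⁻¹) atTop).const_mul_left α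
  exact ((hf.trans isBigO_inv_natCast_sq).add leading).congr_left fun n => by ring

lemma mul (hf : HasInvNatExpansion f α) (hg : HasInvNatExpansion g β) :
    HasInvNatExpansion (fun n => f n * g n) (α + β) := by
  have cross : (fun n => (f n - 1) * (g n - 1)) =O[atTop] fun n : ℕ => (n : 𝕜)⁻¹ ^ 2 := by
    simpa only [sq] using hf.isBigO_sub_one.mul hg.isBigO_sub_one
  exact ((IsBigO.add hf hg).add cross).congr_left fun n => by ring

lemma summable_norm_sub (hf : HasInvNatExpansion f α) :
    Summable fun n : ℕ => ‖f n - (1 + α / n)‖ := by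
  refine (summable_of_isBigO_nat ?_ (IsBigO.norm_right hf)).norm
  simp

lemma summable_norm_mul_sub_one (hf : HasInvNatExpansion f α) (hg : HasInvNatExpansion g (-α)) :
    Summable fun n => ‖f n * g n - 1‖ := by
  simpa using (hf.mul hg).summable_norm_sub

lemma summable_norm_two_sub_sub (hf : HasInvNatExpansion f α) (hg : HasInvNatExpansion g (-α)) :
    Summable fun n => ‖2 - f n - g n‖ := by
  refine (hf.summable_norm_sub.add hg.summable_norm_sub).of_nonneg_of_le
    (fun _ => norm_nonneg _) fun n => ?_
  calc ‖2 - f n - g n‖ = ‖(f n - (1 + α / n)) + (g n - (1 + -α / n))‖ := by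
        rw [← norm_neg]
        ring_nf
    _ ≤ _ := norm_add_le _ _

end HasInvNatExpansion

lemma hasInvNatExpansion_quadratic_div_quadratic (u v p q : 𝕜) :
    HasInvNatExpansion (fun n => (u + n) * (v + n) / ((p + n) * (q + n))) (u + v - p - q) := by
  have h := (hasInvNatExpansion_add_div_add u p).mul (hasInvNatExpansion_add_div_add v q)
  simp only [div_mul_div_comm] at h
  convert h using 1
  ring

lemma hasInvNatExpansion_four_mul_div (u v e : 𝕜) :
    HasInvNatExpansion
      (fun n => 4 * ((u + n) * (v + n) / ((e + 2 * n) * (e + 2 * n + 1)))) (u + v - e - 1 / 2) := by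
  convert hasInvNatExpansion_quadratic_div_quadratic u v (e / 2) ((e + 1) / 2) using 1
  · funext n
    rw [show (e + 2 * n) * (e + 2 * n + 1) = 4 * ((e / 2 + n) * ((e + 1) / 2 + n)) by ring,
      ← mul_div_assoc, mul_div_mul_left _ _ (by norm_num)]
  · ring

end InvNatExpansion

lemma norm_sub_one_le_norm_sq_sub_one {𝕜 : Type*} [RCLike 𝕜] {z : 𝕜} (hz : 0 ≤ RCLike.re z) :
    ‖z - 1‖ ≤ ‖z ^ 2 - 1‖ := by
  have one_le : 1 ≤ ‖z + 1‖ := by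
    calc 1 ≤ RCLike.re (z + 1) := by simpa using hz
      _ ≤ ‖z + 1‖ := RCLike.re_le_norm _
  calc ‖z - 1‖ ≤ ‖z + 1‖ * ‖z - 1‖ := le_mul_of_one_le_left (norm_nonneg _) one_le
    _ = ‖z ^ 2 - 1‖ := by rw [← norm_mul]; ring_nf

lemma norm_cpow_inv_two_sub_one_le (w : ℂ) : ‖w ^ (2⁻¹ : ℂ) - 1‖ ≤ ‖w - 1‖ := by
  have re_nonneg : 0 ≤ (w ^ (2⁻¹ : ℂ)).re := by
    rw [Complex.cpow_inv_two_re]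
    positivity
  have sq_eq : (w ^ (2⁻¹ : ℂ)) ^ 2 = w := Complex.cpow_nat_inv_pow w two_ne_zero
  simpa only [sq_eq] using norm_sub_one_le_norm_sq_sub_one (𝕜 := ℂ) re_nonneg

lemma summable_norm_cpow_inv_two_sub_one {ι : Type*} {w : ι → ℂ}
    (hw : Summable fun i => ‖w i - 1‖) : Summable fun i => ‖w i ^ (2⁻¹ : ℂ) - 1‖ :=
  hw.of_nonneg_of_le (fun _ => norm_nonneg _) fun i => norm_cpow_inv_two_sub_one_le (w i)

/-- The J-fraction coefficients satisfy `∑ |aₖ| < ∞` and `∑ |bₖ − 1| < ∞`, where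
`bₖ = (bₖ²)^{1/2}` is the principal complex square root; in particular `bₖ → 1`. -/
theorem stmt_5 (a b c : ℂ) (hc : ∀ n : ℕ, c ≠ -(n : ℂ))
    (cseq : ℕ → ℂ)
    (hodd : ∀ j : ℕ,
      cseq (2 * j + 1) = -((a + j) * (c - b + j)) / ((c + 2 * j) * (c + 2 * j + 1)))
    (heven : ∀ j : ℕ, 1 ≤ j →
      cseq (2 * j) = -((b + j) * (c - a + j)) / ((c + 2 * j - 1) * (c + 2 * j)))
    (d : ℕ → ℂ) (hd : ∀ k : ℕ, d k = -cseq k)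
    (A : ℕ → ℂ) (hA0 : A 0 = 2 - 4 * d 1)
    (hA : ∀ n : ℕ, 1 ≤ n → A n = 2 - 4 * d (2 * n + 1) - 4 * d (2 * n + 2))
    (Bsq : ℕ → ℂ) (hBsq : ∀ k : ℕ, Bsq k = 16 * d (2 * k + 3) * d (2 * k + 4))
    (B : ℕ → ℂ) (hB : ∀ k : ℕ, B k = Bsq k ^ ((1 : ℂ) / 2)) :
    (Summable fun k : ℕ => ‖A k‖) ∧ (Summable fun k : ℕ => ‖B k - 1‖) ∧
      Tendsto B atTop (𝓝 (1 : ℂ)) := by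
  have odd_expansion : HasInvNatExpansion (fun n => 4 * d (2 * n + 1)) (a - b - 1 / 2) := by
    convert hasInvNatExpansion_four_mul_div a (c - b) c using 1
    · simp only [hd, hodd, neg_div, neg_neg]
    · ring
  have even_expansion : HasInvNatExpansion (fun n => 4 * d (2 * n + 2)) (-(a - b - 1 / 2)) := by
    convert hasInvNatExpansion_four_mul_div (b + 1) (c - a + 1) (c + 1) using 1
    · funext n
      rw [hd, ← mul_add_one, heven (n + 1) n.succ_pos]
      push_cast
      ring_nf
    · ring
  have summable_A : Summable fun k => ‖A k‖ := by
    rw [← summable_nat_add_iff 1]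
    simpa only [hA _ (Nat.succ_pos _)] using
      (summable_nat_add_iff 1).mpr (odd_expansion.summable_norm_two_sub_sub even_expansion)
  have summable_Bsq : Summable fun k => ‖Bsq k - 1‖ := by
    have h := odd_expansion.summable_norm_mul_sub_one even_expansion
    exact ((summable_nat_add_iff 1).mpr h).congr fun k => by rw [hBsq]; ring_nf
  have summable_B : Summable fun k => ‖B k - 1‖ := by
    simpa only [hB, one_div] using summable_norm_cpow_inv_two_sub_one summable_Bsq
  exact ⟨summable_A, summable_B,
    tendsto_iff_norm_sub_tendsto_zero.mpr summable_B.tendsto_atTop_zero⟩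
end

section
/- Let a, b, c be complex numbers such that c is not a nonpositive integer. Define c_{2j+1} = −(a+j)(c−b+j)/((c+2j)(c+2j+1)) for j ≥ 0, c_{2j} = −(b+j)(c−a+j)/((c+2j−1)(c+2j)) for j ≥ 1, d_j = −c_j, a_0 = 2 − 4d_1, a_n = 2 − 4d_{2n+1} − 4d_{2n+2} for n ≥ 1, b_k² = 16 d_{2k+3} d_{2k+4} for k ≥ 0, and let b_k = (b_k²)^{1/2} be the principal complex square root. Then there exist bounded (continuous) linear operators J and J₀ on the Hilbert space ℓ² = ℓ²(ℕ, ℂ) such that for every x ∈ ℓ² and every n ≥ 0: (J₀ x)(0) = x(1), (J₀ x)(n+1) = x(n) + x(n+2); (J x)(0) = a_0 x(0) + b_0 x(1), (J x)(n+1) = b_n x(n) + a_{n+1} x(n+1) + b_{n+1} x(n+2); and moreover J − J₀ is a compact operator. -/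
/-!
A Jacobi operator is built from multiplication by its coefficient sequences and the two unilateral
shifts, so it depends linearly on its coefficients: `J - J₀` is the Jacobi operator with
coefficients `a` and `b - 1`. Multiplication by a null sequence is the operator-norm limit of its
finite truncations, hence compact. It remains to see that `a → 0` and `b → 1`. This holds because
`c_n → -1/4`, where the `c_n` are the coefficients of Gauss's continued fraction for
`₂F₁(a, b + 1; c + 1) / ₂F₁(a, b; c)`, and because the principal square root is continuous at `1`.
-/

open Filter Function Topology
open scoped ENNReal lp

section Diagonal

variable {ι 𝕜 : Type*} [RCLike 𝕜] {E : ι → Type*} [∀ i, NormedAddCommGroup (E i)]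

theorem lp_infty_hasSum_single [DecidableEq ι] {x : lp E ∞}
    (hx : Tendsto (fun i => ‖x i‖) cofinite (𝓝 0)) :
    HasSum (fun i => lp.single ∞ i (x i)) x := by
  refine Metric.tendsto_nhds.2 fun ε hε => ?_
  have hlarge : {i | ε / 2 ≤ ‖x i‖}.Finite := by
    simpa only [eventually_cofinite, not_lt] using hx.eventually_lt_const (half_pos hε)
  filter_upwards [eventually_ge_atTop hlarge.toFinset] with s hs
  suffices ‖∑ i ∈ s, lp.single ∞ i (x i) - x‖ ≤ ε / 2 by
    rw [dist_eq_norm]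
    linarith
  refine lp.norm_le_of_forall_le (half_pos hε).le fun j => ?_
  rw [lp.coeFn_sub, lp.coeFn_sum, Pi.sub_apply, Finset.sum_apply]
  simp only [lp.coeFn_single, Finset.sum_pi_single]
  split_ifs with hj
  · simpa using (half_pos hε).le
  · rw [zero_sub, norm_neg]
    exact le_of_not_ge fun h => hj (hs (hlarge.mem_toFinset.2 h))

variable [∀ i, NormedSpace 𝕜 (E i)] (p : ℝ≥0∞) [Fact (1 ≤ p)]

variable (𝕜 E) in
/-- The diagonal operator on `ℓ^p` with entries the bounded scalar sequence `w`, as a continuous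
linear function of `w`. -/
noncomputable def diagonalCLM : ℓ^∞(ι, 𝕜) →L[𝕜] lp E p →L[𝕜] lp E p :=
  lp.holderL p (fun _ => ContinuousLinearMap.lsmul 𝕜 𝕜) (K := 1)
    fun _ => ContinuousLinearMap.opNorm_lsmul_le

@[simp]
theorem diagonalCLM_apply (w : ℓ^∞(ι, 𝕜)) (x : lp E p) (i : ι) :
    diagonalCLM 𝕜 E p w x i = w i • x i :=
  rfl

theorem diagonalCLM_single [DecidableEq ι] (i : ι) (c : 𝕜) :
    diagonalCLM 𝕜 E p (lp.single ∞ i c) =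
      (c • lp.singleContinuousLinearMap 𝕜 E p i) ∘L lp.evalCLM 𝕜 E p i := by
  ext x j
  obtain rfl | hj := eq_or_ne j i
  · simp [lp.evalCLM]
  · simp [hj]

theorem isCompactOperator_diagonalCLM [∀ i, ProperSpace (E i)] {w : ℓ^∞(ι, 𝕜)}
    (hw : Tendsto w cofinite (𝓝 0)) :
    IsCompactOperator (diagonalCLM 𝕜 E p w) := by
  classical
  have hsum : HasSum (fun i => diagonalCLM 𝕜 E p (lp.single ∞ i (w i))) (diagonalCLM 𝕜 E p w) :=
    (lp_infty_hasSum_single (by simpa using hw.norm)).mapL (diagonalCLM 𝕜 E p)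
  have hsingle (i : ι) : IsCompactOperator (diagonalCLM 𝕜 E p (lp.single ∞ i (w i))) := by
    rw [diagonalCLM_single]
    exact (isCompactOperator_of_locallyCompactSpace_rng
      (w i • lp.singleContinuousLinearMap 𝕜 E p i)).comp_clm (lp.evalCLM 𝕜 E p i)
  exact isCompactOperator_of_tendsto hsum <| .of_forall fun s =>
    sum_mem (S := compactOperator (RingHom.id 𝕜) (lp E p) (lp E p)) fun i _ => hsingle i

end Diagonal

section Reindexing

variable {ι κ 𝕜 E : Type*} [NormedAddCommGroup E] {p : ℝ≥0∞} {f : ι → κ}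

theorem memℓp_comp_injective (hf : Injective f) {x : κ → E} (hx : Memℓp x p) :
    Memℓp (x ∘ f) p := by
  obtain rfl | rfl | hp := p.trichotomy
  · exact memℓp_zero (hx.finite_dsupport.preimage hf.injOn)
  · exact memℓp_infty (hx.bddAbove.mono (Set.range_comp_subset_range f fun i => ‖x i‖))
  · exact memℓp_gen ((hx.summable hp).comp_injective hf)

theorem norm_extend_zero_apply_rpow (f : ι → κ) (x : ι → E) {r : ℝ} (hr : r ≠ 0) :
    (fun k => ‖extend f x 0 k‖ ^ r) = extend f (fun i => ‖x i‖ ^ r) 0 := by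
  ext k
  rw [apply_extend (fun y : E => ‖y‖ ^ r)]
  simp [comp_def, Pi.zero_def, Real.zero_rpow hr]

theorem norm_extend_zero_apply_le {x : ι → E} {C : ℝ} (hC : 0 ≤ C) (hx : ∀ i, ‖x i‖ ≤ C)
    (f : ι → κ) (k : κ) : ‖extend f x 0 k‖ ≤ C := by
  classical
  rw [extend_def]
  split_ifs
  exacts [hx _, by simpa using hC]

theorem memℓp_extend_zero (hf : Injective f) {x : ι → E} (hx : Memℓp x p) :
    Memℓp (extend f x 0) p := by
  obtain rfl | rfl | hp := p.trichotomy
  · refine memℓp_zero ?_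
    change (support (extend f x 0)).Finite
    rw [support_extend_zero hf]
    exact hx.finite_dsupport.image f
  · obtain ⟨C, hC⟩ := hx.bddAbove
    refine memℓp_infty ⟨max C 0, Set.forall_mem_range.2 ?_⟩
    exact norm_extend_zero_apply_le (le_max_right C 0)
      (fun i => (hC (Set.mem_range_self i)).trans (le_max_left C 0)) f
  · refine memℓp_gen ?_
    rw [norm_extend_zero_apply_rpow f x hp.ne', summable_extend_zero hf]
    exact hx.summable hp

variable [NontriviallyNormedField 𝕜] [NormedSpace 𝕜 E] [Fact (1 ≤ p)]

theorem norm_lp_comp_injective_le (hf : Injective f) (x : ℓ^p(κ, E)) :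
    ‖(⟨x ∘ f, memℓp_comp_injective hf (lp.memℓp x)⟩ : ℓ^p(ι, E))‖ ≤ ‖x‖ := by
  obtain rfl | hp := p.dichotomy
  · exact lp.norm_le_of_forall_le (norm_nonneg x) fun i =>
      lp.norm_apply_le_norm ENNReal.top_ne_zero x (f i)
  · have hp : 0 < p.toReal := zero_lt_one.trans_le hp
    refine lp.norm_le_of_tsum_le hp (norm_nonneg x) ?_
    rw [lp.norm_rpow_eq_tsum hp]
    exact ((lp.memℓp x).summable hp |>.comp_injective hf).tsum_le_tsum_of_inj f hf
      (fun _ _ => by positivity) (fun _ => le_rfl) ((lp.memℓp x).summable hp)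

theorem norm_lp_extend_zero_le (hf : Injective f) (x : ℓ^p(ι, E)) :
    ‖(⟨extend f x 0, memℓp_extend_zero hf (lp.memℓp x)⟩ : ℓ^p(κ, E))‖ ≤ ‖x‖ := by
  obtain rfl | hp := p.dichotomy
  · exact lp.norm_le_of_forall_le (norm_nonneg x) <| norm_extend_zero_apply_le (norm_nonneg x)
      (lp.norm_apply_le_norm ENNReal.top_ne_zero x) f
  · have hp : 0 < p.toReal := zero_lt_one.trans_le hp
    refine lp.norm_le_of_tsum_le hp (norm_nonneg x) ?_
    rw [lp.norm_rpow_eq_tsum hp]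
    change ∑' k, ‖extend f x 0 k‖ ^ p.toReal ≤ _
    rw [norm_extend_zero_apply_rpow f x hp.ne', tsum_extend_zero hf]

variable (𝕜 E p) in
/-- Precomposition with an injection, as a contraction of `ℓ^p` spaces. -/
noncomputable def compInjectiveCLM (hf : Injective f) : ℓ^p(κ, E) →L[𝕜] ℓ^p(ι, E) :=
  LinearMap.mkContinuous
    { toFun x := ⟨x ∘ f, memℓp_comp_injective hf (lp.memℓp x)⟩
      map_add' _ _ := rfl
      map_smul' _ _ := rfl }
    1 fun x => (norm_lp_comp_injective_le hf x).trans_eq (one_mul ‖x‖).symm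

@[simp]
theorem compInjectiveCLM_apply (hf : Injective f) (x : ℓ^p(κ, E)) (i : ι) :
    compInjectiveCLM 𝕜 E p hf x i = x (f i) :=
  rfl

variable (𝕜 E p) in
/-- Extension by zero along an injection, as a contraction of `ℓ^p` spaces. -/
noncomputable def extendZeroCLM (hf : Injective f) : ℓ^p(ι, E) →L[𝕜] ℓ^p(κ, E) :=
  LinearMap.mkContinuous
    { toFun x := ⟨extend f x 0, memℓp_extend_zero hf (lp.memℓp x)⟩
      map_add' x y := by
        ext k
        simpa only [add_zero, lp.coeFn_add] using congrFun (extend_add f (x : ι → E) y 0 0) k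
      map_smul' c x := by
        ext k
        simpa only [smul_zero, lp.coeFn_smul, RingHom.id_apply] using
          congrFun (extend_smul c f (x : ι → E) 0) k }
    1 fun x => (norm_lp_extend_zero_le hf x).trans_eq (one_mul ‖x‖).symm

@[simp]
theorem extendZeroCLM_apply (hf : Injective f) (x : ℓ^p(ι, E)) (k : κ) :
    extendZeroCLM 𝕜 E p hf x k = extend f x 0 k :=
  rfl

end Reindexing

section Jacobi

variable {𝕜 E : Type*} [RCLike 𝕜] [NormedAddCommGroup E] [NormedSpace 𝕜 E]
  {p : ℝ≥0∞} [Fact (1 ≤ p)]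

variable (E p) in
/-- The Jacobi operator on `ℓ^p` given by the symmetric tridiagonal matrix with diagonal `a` and
off-diagonal `b`, the entry `b n` standing at `(n, n + 1)` and `(n + 1, n)`. -/
noncomputable def jacobiCLM (a b : ℓ^∞(ℕ, 𝕜)) : ℓ^p(ℕ, E) →L[𝕜] ℓ^p(ℕ, E) :=
  diagonalCLM 𝕜 _ p a + diagonalCLM 𝕜 _ p b ∘L compInjectiveCLM 𝕜 E p Nat.succ_injective +
    extendZeroCLM 𝕜 E p Nat.succ_injective ∘L diagonalCLM 𝕜 _ p b

theorem jacobiCLM_apply_zero (a b : ℓ^∞(ℕ, 𝕜)) (x : ℓ^p(ℕ, E)) :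
    jacobiCLM E p a b x 0 = a 0 • x 0 + b 0 • x 1 := by
  simp [jacobiCLM]

theorem jacobiCLM_apply_succ (a b : ℓ^∞(ℕ, 𝕜)) (x : ℓ^p(ℕ, E)) (n : ℕ) :
    jacobiCLM E p a b x (n + 1) =
      b n • x n + a (n + 1) • x (n + 1) + b (n + 1) • x (n + 2) := by
  simp only [jacobiCLM, add_apply, ContinuousLinearMap.comp_apply, lp.coeFn_add, Pi.add_apply,
    diagonalCLM_apply, compInjectiveCLM_apply, extendZeroCLM_apply, Nat.succ_eq_add_one,
    Nat.succ_injective.extend_apply]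
  abel

theorem jacobiCLM_sub (a a' b b' : ℓ^∞(ℕ, 𝕜)) :
    jacobiCLM E p a b - jacobiCLM E p a' b' = jacobiCLM E p (a - a') (b - b') := by
  simp only [jacobiCLM, map_sub, ContinuousLinearMap.sub_comp, ContinuousLinearMap.comp_sub]
  abel

theorem isCompactOperator_jacobiCLM [ProperSpace E] {a b : ℓ^∞(ℕ, 𝕜)}
    (ha : Tendsto a atTop (𝓝 0)) (hb : Tendsto b atTop (𝓝 0)) :
    IsCompactOperator (jacobiCLM E p a b) := by
  rw [← Nat.cofinite_eq_atTop] at ha hb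
  have hA := isCompactOperator_diagonalCLM (E := fun _ => E) p ha
  have hB := isCompactOperator_diagonalCLM (E := fun _ => E) p hb
  exact (hA.add (hB.comp_clm (compInjectiveCLM 𝕜 E p Nat.succ_injective))).add
    (hB.clm_comp (extendZeroCLM 𝕜 E p Nat.succ_injective))

end Jacobi

theorem memℓp_infty_of_tendsto {E : Type*} [NormedAddCommGroup E] {x : ℕ → E} {l : E}
    (hx : Tendsto x atTop (𝓝 l)) : Memℓp x ∞ :=
  memℓp_infty hx.norm.bddAbove_range

section Coefficients

variable {𝕜 : Type*} [RCLike 𝕜]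

theorem tendsto_mul_div_mul_atTop (u v s t α β : 𝕜) {γ δ : 𝕜} (hγ : γ ≠ 0) (hδ : δ ≠ 0) :
    Tendsto (fun k : ℕ => (u + α * k) * (v + β * k) / ((s + γ * k) * (t + δ * k))) atTop
      (𝓝 (α * β / (γ * δ))) := by
  simp only [mul_div_mul_comm]
  exact (tendsto_add_mul_div_add_mul_atTop_nhds u s α hγ).mul
    (tendsto_add_mul_div_add_mul_atTop_nhds v t β hδ)

theorem tendsto_gaussCoeff_odd (a b c : 𝕜) :
    Tendsto (fun j : ℕ => -((a + j) * (c - b + j)) / ((c + 2 * j) * (c + 2 * j + 1))) atTop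
      (𝓝 (-(1 / 4))) := by
  convert! (tendsto_mul_div_mul_atTop a (c - b) c (c + 1) 1 1 two_ne_zero two_ne_zero).neg
    using 2 with j
  · ring
  · norm_num

theorem tendsto_gaussCoeff_even (a b c : 𝕜) :
    Tendsto (fun j : ℕ => -((b + j) * (c - a + j)) / ((c + 2 * j - 1) * (c + 2 * j))) atTop
      (𝓝 (-(1 / 4))) := by
  convert! (tendsto_mul_div_mul_atTop b (c - a) (c - 1) c 1 1 two_ne_zero two_ne_zero).neg
    using 2 with j
  · ring
  · norm_num

theorem tendsto_jacobiDiagonal {d : ℕ → 𝕜}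
    (hodd : Tendsto (fun n => d (2 * n + 1)) atTop (𝓝 (1 / 4)))
    (heven : Tendsto (fun n => d (2 * n)) atTop (𝓝 (1 / 4))) :
    Tendsto (fun n => 2 - 4 * d (2 * n + 1) - 4 * d (2 * n + 2)) atTop (𝓝 0) := by
  convert! ((hodd.const_mul 4).const_sub 2).sub
    ((heven.comp (tendsto_add_atTop_nat 1)).const_mul 4) using 2
  norm_num

theorem tendsto_jacobiOffDiagonal_sq {d : ℕ → 𝕜}
    (hodd : Tendsto (fun n => d (2 * n + 1)) atTop (𝓝 (1 / 4)))
    (heven : Tendsto (fun n => d (2 * n)) atTop (𝓝 (1 / 4))) :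
    Tendsto (fun k => 16 * d (2 * k + 3) * d (2 * k + 4)) atTop (𝓝 1) := by
  convert! ((hodd.comp (tendsto_add_atTop_nat 1)).const_mul 16).mul
    (heven.comp (tendsto_add_atTop_nat 2)) using 2
  norm_num

end Coefficients

theorem tendsto_cpow_const_of_tendsto_one {α : Type*} {l : Filter α} {f : α → ℂ}
    (hf : Tendsto f l (𝓝 1)) (s : ℂ) : Tendsto (fun x => f x ^ s) l (𝓝 1) := by
  have hcont := (continuousAt_cpow_const (b := s) Complex.one_mem_slitPlane).tendsto
  rw [Complex.one_cpow] at hcont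
  exact hcont.comp hf

/-- The Jacobi matrix `J` built from the hypergeometric parameters and the free Jacobi
matrix `J₀` define bounded operators on `ℓ²(ℕ, ℂ)`, and `J − J₀` is compact. -/
theorem stmt_12 (a b c : ℂ) (hc : ∀ n : ℕ, c ≠ -(n : ℂ))
    (cseq : ℕ → ℂ)
    (hodd : ∀ j : ℕ,
      cseq (2 * j + 1) = -((a + j) * (c - b + j)) / ((c + 2 * j) * (c + 2 * j + 1)))
    (heven : ∀ j : ℕ, 1 ≤ j →
      cseq (2 * j) = -((b + j) * (c - a + j)) / ((c + 2 * j - 1) * (c + 2 * j)))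
    (d : ℕ → ℂ) (hd : ∀ k : ℕ, d k = -cseq k)
    (A : ℕ → ℂ) (hA0 : A 0 = 2 - 4 * d 1)
    (hA : ∀ n : ℕ, 1 ≤ n → A n = 2 - 4 * d (2 * n + 1) - 4 * d (2 * n + 2))
    (Bsq : ℕ → ℂ) (hBsq : ∀ k : ℕ, Bsq k = 16 * d (2 * k + 3) * d (2 * k + 4))
    (B : ℕ → ℂ) (hB : ∀ k : ℕ, B k = Bsq k ^ ((1 : ℂ) / 2)) :
    ∃ J J₀ : lp (fun _ : ℕ => ℂ) 2 →L[ℂ] lp (fun _ : ℕ => ℂ) 2,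
      (∀ x : lp (fun _ : ℕ => ℂ) 2,
        (J₀ x) 0 = x 1 ∧
        (∀ n : ℕ, (J₀ x) (n + 1) = x n + x (n + 2)) ∧
        (J x) 0 = A 0 * x 0 + B 0 * x 1 ∧
        ∀ n : ℕ, (J x) (n + 1) = B n * x n + A (n + 1) * x (n + 1) + B (n + 1) * x (n + 2)) ∧
      IsCompactOperator (J - J₀ : lp (fun _ : ℕ => ℂ) 2 →L[ℂ] lp (fun _ : ℕ => ℂ) 2) := by
  have hodd_lim : Tendsto (fun j => d (2 * j + 1)) atTop (𝓝 (1 / 4)) := by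
    simpa only [hd, hodd, neg_neg] using (tendsto_gaussCoeff_odd a b c).neg
  have heven_lim : Tendsto (fun j => d (2 * j)) atTop (𝓝 (1 / 4)) := by
    have hcseq := (tendsto_gaussCoeff_even a b c).congr'
      (eventually_atTop.2 ⟨1, fun j hj => (heven j hj).symm⟩)
    simpa only [hd, neg_neg] using hcseq.neg
  have hA_lim : Tendsto A atTop (𝓝 0) :=
    (tendsto_jacobiDiagonal hodd_lim heven_lim).congr'
      (eventually_atTop.2 ⟨1, fun n hn => (hA n hn).symm⟩)
  have hB_lim : Tendsto B atTop (𝓝 1) := by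
    simpa only [← hBsq, ← hB] using
      tendsto_cpow_const_of_tendsto_one (tendsto_jacobiOffDiagonal_sq hodd_lim heven_lim) (1 / 2)
  let α : ℓ^∞(ℕ, ℂ) := ⟨A, memℓp_infty_of_tendsto hA_lim⟩
  let β : ℓ^∞(ℕ, ℂ) := ⟨B, memℓp_infty_of_tendsto hB_lim⟩
  refine ⟨jacobiCLM ℂ 2 α β, jacobiCLM ℂ 2 0 1, fun x => ⟨?_, fun n => ?_,
    jacobiCLM_apply_zero α β x, jacobiCLM_apply_succ α β x⟩, ?_⟩
  · simp [jacobiCLM_apply_zero]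
  · simp [jacobiCLM_apply_succ]
  · rw [jacobiCLM_sub]
    refine isCompactOperator_jacobiCLM (by simpa using hA_lim) ?_
    exact tendsto_sub_nhds_zero_iff.2 hB_lim
end
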